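/- Let (H, ‖·‖) be a separable Hilbert space and ξ a random variable with values in H defined on a probability space, with ‖ξ‖ ≤ M < ∞ almost surely. Let σ²(ξ) = E(‖ξ‖²), and let y₁,…,y_m be independent copies of the underlying random variable. Then for any 0 < δ < 1, with probability at least 1 - δ, ‖(1/m)∑_{i=1}^m ξ(y_i) - E(ξ)‖ ≤ (2M log(2/δ))/m + √(2σ²(ξ) log(2/δ)/m). -/

import Mathlib

open MeasureTheory

open ProbabilityTheory

/-!
The power series of `z ↦ cosh √z` has nonnegative coefficients, so this function is convex on
`[0, ∞)`. As `‖x + y‖ ^ 2` is a convex combination of `(‖x‖ + ‖y‖) ^ 2` and `(‖x‖ - ‖y‖) ^ 2`,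
convexity bounds `cosh ‖x + y‖` by `cosh ‖x‖ * (exp ‖y‖ - ‖y‖)` plus a term linear in `y`. For a
centered `y` independent of `x` the linear term integrates to zero, which gives Pinelis' inequality
`𝔼 cosh ‖∑ Xᵢ‖ ≤ ∏ 𝔼 (exp ‖Xᵢ‖ - ‖Xᵢ‖)`: the norm of a sum in a Hilbert space has the exponential
moments of a sum of real variables. Markov's inequality applied to the rescaled sum `l • ∑ Xᵢ`, with
Bernstein's choice of `l`, gives the tail bound.
-/

lemma convexOn_cosh_sqrt : ConvexOn ℝ (Set.Ici 0) fun x ↦ Real.cosh √x := by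
  refine ⟨convex_Ici 0, fun x hx y hy a b ha hb hab ↦ ?_⟩
  have hasSum_cosh_sqrt {z : ℝ} (hz : 0 ≤ z) :
      HasSum (fun n ↦ z ^ n / (2 * n).factorial) (Real.cosh √z) := by
    simpa only [pow_mul, Real.sq_sqrt hz] using Real.hasSum_cosh √z
  refine hasSum_le (fun n ↦ ?_) (hasSum_cosh_sqrt (convex_Ici 0 hx hy ha hb hab))
    (((hasSum_cosh_sqrt hx).mul_left a).add ((hasSum_cosh_sqrt hy).mul_left b))
  rw [← mul_div_assoc, ← mul_div_assoc, ← add_div]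
  gcongr
  exact (convexOn_pow n).2 hx hy ha hb hab

lemma exp_sub_self_le_one_add_sq_div {x b : ℝ} (hx : 0 ≤ x) (hxb : x ≤ b) (hb : b < 1) :
    Real.exp x - x ≤ 1 + x ^ 2 / (2 * (1 - b)) := by
  have hcubic : Real.exp x ≤ 1 + x + x ^ 2 / 2 + x ^ 3 * (2 / 9) := by
    have := Real.exp_bound' hx (hxb.trans hb.le) (n := 3) (by norm_num)
    norm_num [Finset.sum_range_succ, Nat.factorial] at this
    linarith
  have hgeom : x ^ 2 / 2 + x ^ 3 * (2 / 9) ≤ x ^ 2 / (2 * (1 - x)) := by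
    rw [le_div_iff₀ (by linarith)]
    nlinarith [pow_nonneg hx 3, pow_nonneg hx 4]
  have hmono : x ^ 2 / (2 * (1 - x)) ≤ x ^ 2 / (2 * (1 - b)) := by
    gcongr
  linarith

lemma exists_bernstein_exponent {b v t : ℝ} (hb : 0 ≤ b) (hv : 0 < v) (ht : 0 < t) :
    ∃ l, 0 < l ∧ l * b < 1 ∧
      l ^ 2 * v / (2 * (1 - l * b)) - l * (b * t + √(2 * v * t)) = -t := by
  have hw : 0 < √(2 * v * t) := by positivity
  have hw_sq : √(2 * v * t) ^ 2 = 2 * v * t := Real.sq_sqrt (by positivity)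
  set w := √(2 * v * t)
  have hone_sub : 1 - w / (v + b * w) * b = v / (v + b * w) := by
    field_simp
    ring
  -- the maximizer of `l * r - l ^ 2 * v / (2 * (1 - l * b))` for `r = b * t + w`
  refine ⟨w / (v + b * w), by positivity, ?_, ?_⟩
  · have : 0 < v / (v + b * w) := by positivity
    linarith
  · rw [hone_sub]
    field_simp
    linear_combination -hw_sq

section InnerProductSpace

variable {H : Type*} [NormedAddCommGroup H] [InnerProductSpace ℝ H]

lemma cosh_norm_add_le_cosh_mul_cosh_add (x y : H) :
    Real.cosh ‖x + y‖ ≤ Real.cosh ‖x‖ * Real.cosh ‖y‖ +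
      Real.sinh ‖x‖ / ‖x‖ * (Real.sinh ‖y‖ / ‖y‖) * inner ℝ x y := by
  rcases eq_or_ne x 0 with rfl | hx
  · simp
  rcases eq_or_ne y 0 with rfl | hy
  · simp
  have hxy : 0 < ‖x‖ * ‖y‖ := by positivity
  have hcos := abs_le.1 (abs_real_inner_div_norm_mul_norm_le_one x y)
  set c := inner ℝ x y / (‖x‖ * ‖y‖) with hc
  have hinner : inner ℝ x y = c * (‖x‖ * ‖y‖) := by rw [hc, div_mul_cancel₀ _ hxy.ne']
  have hchord := convexOn_cosh_sqrt.2 (sq_nonneg (‖x‖ + ‖y‖)) (sq_nonneg (‖x‖ - ‖y‖))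
    (by linarith : 0 ≤ (1 + c) / 2) (by linarith : 0 ≤ (1 - c) / 2) (by ring)
  have hsq : (1 + c) / 2 * (‖x‖ + ‖y‖) ^ 2 + (1 - c) / 2 * (‖x‖ - ‖y‖) ^ 2 = ‖x + y‖ ^ 2 := by
    rw [norm_add_sq_real, hinner]
    ring
  simp only [smul_eq_mul, hsq, Real.sqrt_sq_eq_abs, Real.cosh_abs, Real.cosh_add,
    Real.cosh_sub] at hchord
  have hcross : Real.sinh ‖x‖ / ‖x‖ * (Real.sinh ‖y‖ / ‖y‖) * inner ℝ x y =
      c * (Real.sinh ‖x‖ * Real.sinh ‖y‖) := by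
    rw [hinner]
    field_simp
  linarith

/-- The gradient of `x ↦ cosh ‖x‖`; at the origin, `0 / 0 = 0` gives the correct value `0`. -/
noncomputable def gradCoshNorm (x : H) : H := (Real.sinh ‖x‖ / ‖x‖) • x

lemma norm_gradCoshNorm (x : H) : ‖gradCoshNorm x‖ = Real.sinh ‖x‖ := by
  rcases eq_or_ne x 0 with rfl | hx
  · simp [gradCoshNorm]
  · rw [gradCoshNorm, norm_smul, Real.norm_of_nonneg (by positivity),
      div_mul_cancel₀ _ (norm_ne_zero_iff.2 hx)]

lemma measurable_gradCoshNorm [MeasurableSpace H] [BorelSpace H] [SecondCountableTopology H] :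
    Measurable (gradCoshNorm : H → H) := by
  unfold gradCoshNorm
  fun_prop

lemma cosh_norm_add_le (x y : H) :
    Real.cosh ‖x + y‖ ≤
      Real.cosh ‖x‖ * (Real.exp ‖y‖ - ‖y‖) + inner ℝ (gradCoshNorm x) y := by
  rcases eq_or_ne y 0 with rfl | hy
  · simp
  have hy' : 0 < ‖y‖ := norm_pos_iff.2 hy
  have hratio : 1 ≤ Real.sinh ‖y‖ / ‖y‖ :=
    (one_le_div hy').2 (Real.self_le_sinh_iff.2 hy'.le)
  have hinner : inner ℝ (gradCoshNorm x) y ≤ Real.cosh ‖x‖ * ‖y‖ := calc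
    inner ℝ (gradCoshNorm x) y ≤ ‖gradCoshNorm x‖ * ‖y‖ := real_inner_le_norm _ _
    _ ≤ Real.cosh ‖x‖ * ‖y‖ := by
      rw [norm_gradCoshNorm]
      gcongr
      exact (Real.sinh_lt_cosh _).le
  calc Real.cosh ‖x + y‖
      ≤ Real.cosh ‖x‖ * Real.cosh ‖y‖ +
          Real.sinh ‖y‖ / ‖y‖ * inner ℝ (gradCoshNorm x) y := by
        refine (cosh_norm_add_le_cosh_mul_cosh_add x y).trans_eq ?_
        rw [gradCoshNorm, real_inner_smul_left]
        ring
    _ = Real.cosh ‖x‖ * Real.cosh ‖y‖ +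
          (Real.sinh ‖y‖ / ‖y‖ - 1) * inner ℝ (gradCoshNorm x) y +
          inner ℝ (gradCoshNorm x) y := by ring
    _ ≤ Real.cosh ‖x‖ * Real.cosh ‖y‖ +
          (Real.sinh ‖y‖ / ‖y‖ - 1) * (Real.cosh ‖x‖ * ‖y‖) +
          inner ℝ (gradCoshNorm x) y := by
        gcongr
    _ = Real.cosh ‖x‖ * (Real.exp ‖y‖ - ‖y‖) + inner ℝ (gradCoshNorm x) y := by
        rw [← Real.cosh_add_sinh]
        field_simp
        ring

end InnerProductSpace

section Probability

variable {Ω : Type*} {mΩ : MeasurableSpace Ω} {P : Measure Ω}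
  {H : Type*} [NormedAddCommGroup H]

lemma integrable_of_integrable_exp_norm {X : Ω → H} (hX : AEStronglyMeasurable X P)
    (hexp : Integrable (fun ω ↦ Real.exp ‖X ω‖) P) : Integrable X P :=
  hexp.mono' hX (ae_of_all _ fun ω ↦ by linarith [Real.add_one_le_exp ‖X ω‖])

lemma integrable_cosh_norm_of_integrable_exp_norm {X : Ω → H} (hX : AEStronglyMeasurable X P)
    (hexp : Integrable (fun ω ↦ Real.exp ‖X ω‖) P) :
    Integrable (fun ω ↦ Real.cosh ‖X ω‖) P :=
  hexp.mono' (Real.continuous_cosh.comp_aestronglyMeasurable hX.norm)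
    (ae_of_all _ fun ω ↦ by
      rw [Real.norm_of_nonneg (Real.cosh_pos _).le, ← Real.cosh_add_sinh]
      exact le_add_of_nonneg_right (Real.sinh_nonneg_iff.2 (norm_nonneg _)))

lemma integral_exp_norm_sub_norm_nonneg (X : Ω → H) :
    0 ≤ ∫ ω, (Real.exp ‖X ω‖ - ‖X ω‖) ∂P :=
  integral_nonneg fun ω ↦ by
    simp only [Pi.zero_apply]
    linarith [Real.add_one_le_exp ‖X ω‖]

lemma integrable_norm_sq_of_norm_le [IsFiniteMeasure P] {X : Ω → H} {b : ℝ}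
    (hX : AEStronglyMeasurable X P) (hXb : ∀ᵐ ω ∂P, ‖X ω‖ ≤ b) :
    Integrable (fun ω ↦ ‖X ω‖ ^ 2) P := by
  refine Integrable.of_bound (hX.norm.pow 2) (b ^ 2) ?_
  filter_upwards [hXb] with ω hω
  rw [Real.norm_of_nonneg (sq_nonneg _)]
  gcongr

lemma integral_exp_norm_sub_norm_le [IsProbabilityMeasure P] {X : Ω → H} {b : ℝ}
    (hX : AEStronglyMeasurable X P) (hXb : ∀ᵐ ω ∂P, ‖X ω‖ ≤ b) (hb : b < 1) :
    ∫ ω, (Real.exp ‖X ω‖ - ‖X ω‖) ∂P ≤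
      Real.exp ((∫ ω, ‖X ω‖ ^ 2 ∂P) / (2 * (1 - b))) := by
  have hsq := integrable_norm_sq_of_norm_le hX hXb
  calc ∫ ω, (Real.exp ‖X ω‖ - ‖X ω‖) ∂P
      ≤ ∫ ω, (1 + ‖X ω‖ ^ 2 / (2 * (1 - b))) ∂P := by
        refine integral_mono_of_nonneg (ae_of_all _ fun ω ↦ ?_)
          ((integrable_const 1).add (hsq.div_const _)) ?_
        · simp only [Pi.zero_apply]
          linarith [Real.add_one_le_exp ‖X ω‖]
        · filter_upwards [hXb] with ω hω
          exact exp_sub_self_le_one_add_sq_div (norm_nonneg _) hω hb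
    _ = (∫ ω, ‖X ω‖ ^ 2 ∂P) / (2 * (1 - b)) + 1 := by
        rw [integral_add (integrable_const 1) (hsq.div_const _), integral_div, add_comm]
        simp
    _ ≤ Real.exp ((∫ ω, ‖X ω‖ ^ 2 ∂P) / (2 * (1 - b))) := Real.add_one_le_exp _

lemma ae_sum_eq_zero_of_sum_integral_norm_sq_eq_zero {ι : Type*} {X : ι → Ω → H} {s : Finset ι}
    (hsq : ∀ i ∈ s, Integrable (fun ω ↦ ‖X i ω‖ ^ 2) P)
    (hzero : ∑ i ∈ s, ∫ ω, ‖X i ω‖ ^ 2 ∂P = 0) : ∀ᵐ ω ∂P, ∑ i ∈ s, X i ω = 0 := by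
  have hX : ∀ i ∈ s, ∀ᵐ ω ∂P, X i ω = 0 := fun i hi ↦ by
    have hi0 := (Finset.sum_eq_zero_iff_of_nonneg fun j _ ↦
      integral_nonneg fun ω ↦ sq_nonneg ‖X j ω‖).1 hzero i hi
    filter_upwards [(integral_eq_zero_iff_of_nonneg (fun ω ↦ sq_nonneg ‖X i ω‖) (hsq i hi)).1 hi0]
      with ω hω
    simpa using hω
  filter_upwards [(Filter.eventually_all_finset s).2 hX] with ω hω
  exact Finset.sum_eq_zero hω

lemma integral_norm_sub_integral_sq_le [InnerProductSpace ℝ H] [CompleteSpace H]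
    [IsProbabilityMeasure P] {X : Ω → H} (hX : Integrable X P)
    (hsq : Integrable (fun ω ↦ ‖X ω‖ ^ 2) P) :
    ∫ ω, ‖X ω - ∫ ω', X ω' ∂P‖ ^ 2 ∂P ≤ ∫ ω, ‖X ω‖ ^ 2 ∂P := by
  set μ := ∫ ω, X ω ∂P with hμ
  have hinner : Integrable (fun ω ↦ 2 * inner ℝ μ (X ω)) P := (hX.const_inner μ).const_mul 2
  calc ∫ ω, ‖X ω - μ‖ ^ 2 ∂P
      = ∫ ω, (‖X ω‖ ^ 2 - 2 * inner ℝ μ (X ω) + ‖μ‖ ^ 2) ∂P := by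
        simp only [norm_sub_sq_real, real_inner_comm]
    _ = (∫ ω, ‖X ω‖ ^ 2 ∂P) - ‖μ‖ ^ 2 := by
        rw [integral_add (f := fun ω ↦ ‖X ω‖ ^ 2 - 2 * inner ℝ μ (X ω)) (hsq.sub hinner)
          (integrable_const _), integral_sub hsq hinner,
          integral_const_mul, integral_inner hX, ← hμ, real_inner_self_eq_norm_sq,
          integral_const, probReal_univ, one_smul]
        ring
    _ ≤ ∫ ω, ‖X ω‖ ^ 2 ∂P := sub_le_self _ (sq_nonneg _)

variable [MeasurableSpace H] [BorelSpace H] [SecondCountableTopology H]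

lemma integrable_exp_norm_sum [IsProbabilityMeasure P] {ι : Type*} {X : ι → Ω → H}
    (hindep : iIndepFun X P) (hX : ∀ i, AEMeasurable (X i) P)
    (hexp : ∀ i, Integrable (fun ω ↦ Real.exp ‖X i ω‖) P) (s : Finset ι) :
    Integrable (fun ω ↦ Real.exp ‖∑ i ∈ s, X i ω‖) P := by
  classical
  induction s using Finset.induction_on with
  | empty => simp
  | insert i s hi ih =>
    have hindep_exp : (fun ω ↦ Real.exp ‖∑ j ∈ s, X j ω‖) ⟂ᵢ[P] fun ω ↦ Real.exp ‖X i ω‖ := by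
      simpa only [Function.comp_def, Finset.sum_apply] using
        (hindep.indepFun_finsetSum_of_notMem₀ hX hi).comp
          (φ := fun x ↦ Real.exp ‖x‖) (ψ := fun x ↦ Real.exp ‖x‖) (by fun_prop) (by fun_prop)
    refine (hindep_exp.integrable_mul ih (hexp i)).mono'
      (AEMeasurable.aestronglyMeasurable (by fun_prop)) (ae_of_all _ fun ω ↦ ?_)
    rw [Real.norm_of_nonneg (Real.exp_pos _).le, Finset.sum_insert hi, Pi.mul_apply,
      ← Real.exp_add, add_comm (X i ω)]
    gcongr
    exact norm_add_le _ _

variable [InnerProductSpace ℝ H]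

lemma integrable_gradCoshNorm {X : Ω → H} (hX : AEMeasurable X P)
    (hexp : Integrable (fun ω ↦ Real.exp ‖X ω‖) P) :
    Integrable (fun ω ↦ gradCoshNorm (X ω)) P :=
  hexp.mono' (measurable_gradCoshNorm.comp_aemeasurable hX).aestronglyMeasurable
    (ae_of_all _ fun ω ↦ by
      rw [norm_gradCoshNorm, ← Real.cosh_add_sinh]
      exact le_add_of_nonneg_left (Real.cosh_pos _).le)

variable [CompleteSpace H]

lemma integral_cosh_norm_add_le {S X : Ω → H} (hindep : S ⟂ᵢ[P] X)
    (hS : AEMeasurable S P) (hX : AEMeasurable X P)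
    (hSexp : Integrable (fun ω ↦ Real.exp ‖S ω‖) P)
    (hXexp : Integrable (fun ω ↦ Real.exp ‖X ω‖) P) (hmean : ∫ ω, X ω ∂P = 0) :
    ∫ ω, Real.cosh ‖S ω + X ω‖ ∂P ≤
      (∫ ω, Real.cosh ‖S ω‖ ∂P) * ∫ ω, (Real.exp ‖X ω‖ - ‖X ω‖) ∂P := by
  have hXint := integrable_of_integrable_exp_norm hX.aestronglyMeasurable hXexp
  have hcosh := integrable_cosh_norm_of_integrable_exp_norm hS.aestronglyMeasurable hSexp
  have hgrad := integrable_gradCoshNorm hS hSexp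
  have hindep_norm : (fun ω ↦ Real.cosh ‖S ω‖) ⟂ᵢ[P] fun ω ↦ Real.exp ‖X ω‖ - ‖X ω‖ :=
    hindep.comp (φ := fun s ↦ Real.cosh ‖s‖) (ψ := fun x ↦ Real.exp ‖x‖ - ‖x‖)
      (by fun_prop) (by fun_prop)
  have hindep_grad : (fun ω ↦ gradCoshNorm (S ω)) ⟂ᵢ[P] X :=
    hindep.comp measurable_gradCoshNorm measurable_id
  have hprod : Integrable (fun ω ↦ Real.cosh ‖S ω‖ * (Real.exp ‖X ω‖ - ‖X ω‖)) P :=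
    hindep_norm.integrable_mul hcosh (hXexp.sub hXint.norm)
  have hinner : Integrable (fun ω ↦ inner ℝ (gradCoshNorm (S ω)) (X ω)) P :=
    hindep_grad.integrable_bilin hgrad hXint (innerSL ℝ)
  calc ∫ ω, Real.cosh ‖S ω + X ω‖ ∂P
      ≤ ∫ ω, (Real.cosh ‖S ω‖ * (Real.exp ‖X ω‖ - ‖X ω‖) +
          inner ℝ (gradCoshNorm (S ω)) (X ω)) ∂P :=
        integral_mono_of_nonneg (ae_of_all _ fun _ ↦ (Real.cosh_pos _).le) (hprod.add hinner)
          (ae_of_all _ fun _ ↦ cosh_norm_add_le _ _)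
    _ = (∫ ω, Real.cosh ‖S ω‖ * (Real.exp ‖X ω‖ - ‖X ω‖) ∂P) +
          inner ℝ (∫ ω, gradCoshNorm (S ω) ∂P) (∫ ω, X ω ∂P) := by
        rw [integral_add hprod hinner]
        exact congrArg _ (hindep_grad.integral_bilin hgrad hXint (innerSL ℝ))
    _ = (∫ ω, Real.cosh ‖S ω‖ ∂P) * ∫ ω, (Real.exp ‖X ω‖ - ‖X ω‖) ∂P := by
        rw [hmean, inner_zero_right, add_zero]
        exact hindep_norm.integral_fun_mul_eq_mul_integral hcosh.1 (hXexp.sub hXint.norm).1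

variable [IsProbabilityMeasure P] {ι : Type*} {X : ι → Ω → H}

lemma integral_cosh_norm_sum_le (hindep : iIndepFun X P)
    (hX : ∀ i, AEMeasurable (X i) P) (hexp : ∀ i, Integrable (fun ω ↦ Real.exp ‖X i ω‖) P)
    (hmean : ∀ i, ∫ ω, X i ω ∂P = 0) (s : Finset ι) :
    ∫ ω, Real.cosh ‖∑ i ∈ s, X i ω‖ ∂P ≤ ∏ i ∈ s, ∫ ω, (Real.exp ‖X i ω‖ - ‖X i ω‖) ∂P := by
  classical
  induction s using Finset.induction_on with
  | empty => simp
  | insert i s hi ih =>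
    have hindep_sum : (fun ω ↦ ∑ j ∈ s, X j ω) ⟂ᵢ[P] X i := by
      simpa only [Finset.sum_fn] using hindep.indepFun_finsetSum_of_notMem₀ hX hi
    calc ∫ ω, Real.cosh ‖∑ j ∈ insert i s, X j ω‖ ∂P
        = ∫ ω, Real.cosh ‖∑ j ∈ s, X j ω + X i ω‖ ∂P := by
          simp only [Finset.sum_insert hi, add_comm]
      _ ≤ (∫ ω, Real.cosh ‖∑ j ∈ s, X j ω‖ ∂P) * ∫ ω, (Real.exp ‖X i ω‖ - ‖X i ω‖) ∂P :=
          integral_cosh_norm_add_le hindep_sum (by fun_prop) (hX i)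
            (integrable_exp_norm_sum hindep hX hexp s) (hexp i) (hmean i)
      _ ≤ (∏ j ∈ s, ∫ ω, (Real.exp ‖X j ω‖ - ‖X j ω‖) ∂P) *
            ∫ ω, (Real.exp ‖X i ω‖ - ‖X i ω‖) ∂P := by
          gcongr
          exact integral_exp_norm_sub_norm_nonneg _
      _ = ∏ j ∈ insert i s, ∫ ω, (Real.exp ‖X j ω‖ - ‖X j ω‖) ∂P := by
          rw [Finset.prod_insert hi, mul_comm]

lemma measureReal_le_norm_sum_le (hindep : iIndepFun X P)
    (hX : ∀ i, AEMeasurable (X i) P) (hexp : ∀ i, Integrable (fun ω ↦ Real.exp ‖X i ω‖) P)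
    (hmean : ∀ i, ∫ ω, X i ω ∂P = 0) (s : Finset ι) (r : ℝ) :
    P.real {ω | r ≤ ‖∑ i ∈ s, X i ω‖} ≤
      2 * Real.exp (-r) * ∏ i ∈ s, ∫ ω, (Real.exp ‖X i ω‖ - ‖X i ω‖) ∂P := by
  have hcosh : Integrable (fun ω ↦ Real.cosh ‖∑ i ∈ s, X i ω‖) P :=
    integrable_cosh_norm_of_integrable_exp_norm
      (Finset.aestronglyMeasurable_fun_sum _ fun i _ ↦ (hX i).aestronglyMeasurable)
      (integrable_exp_norm_sum hindep hX hexp s)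
  have hsubset : {ω | r ≤ ‖∑ i ∈ s, X i ω‖} ⊆
      {ω | Real.exp r / 2 ≤ Real.cosh ‖∑ i ∈ s, X i ω‖} := fun ω (hω : r ≤ _) ↦ by
    change Real.exp r / 2 ≤ Real.cosh _
    rw [Real.cosh_eq]
    linarith [Real.exp_le_exp.2 hω, Real.exp_pos (-‖∑ i ∈ s, X i ω‖)]
  calc P.real {ω | r ≤ ‖∑ i ∈ s, X i ω‖}
      = 2 * Real.exp (-r) * (Real.exp r / 2 * P.real {ω | r ≤ ‖∑ i ∈ s, X i ω‖}) := by
        rw [Real.exp_neg]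
        field_simp
    _ ≤ 2 * Real.exp (-r) *
          (Real.exp r / 2 * P.real {ω | Real.exp r / 2 ≤ Real.cosh ‖∑ i ∈ s, X i ω‖}) := by
        gcongr
        finiteness
    _ ≤ 2 * Real.exp (-r) * ∫ ω, Real.cosh ‖∑ i ∈ s, X i ω‖ ∂P := by
        gcongr
        exact mul_meas_ge_le_integral_of_nonneg (ae_of_all _ fun _ ↦ (Real.cosh_pos _).le) hcosh _
    _ ≤ 2 * Real.exp (-r) * ∏ i ∈ s, ∫ ω, (Real.exp ‖X i ω‖ - ‖X i ω‖) ∂P := by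
        gcongr
        exact integral_cosh_norm_sum_le hindep hX hexp hmean s

lemma measureReal_le_norm_sum_le_of_norm_le {b : ℝ} (hindep : iIndepFun X P)
    (hX : ∀ i, AEMeasurable (X i) P) (hXb : ∀ i, ∀ᵐ ω ∂P, ‖X i ω‖ ≤ b) (hb : b < 1)
    (hmean : ∀ i, ∫ ω, X i ω ∂P = 0) (s : Finset ι) (r : ℝ) :
    P.real {ω | r ≤ ‖∑ i ∈ s, X i ω‖} ≤
      2 * Real.exp ((∑ i ∈ s, ∫ ω, ‖X i ω‖ ^ 2 ∂P) / (2 * (1 - b)) - r) := by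
  have hexp (i : ι) : Integrable (fun ω ↦ Real.exp ‖X i ω‖) P := by
    refine Integrable.of_bound (AEMeasurable.aestronglyMeasurable (by fun_prop)) (Real.exp b) ?_
    filter_upwards [hXb i] with ω hω
    rw [Real.norm_of_nonneg (Real.exp_pos _).le]
    gcongr
  calc P.real {ω | r ≤ ‖∑ i ∈ s, X i ω‖}
      ≤ 2 * Real.exp (-r) * ∏ i ∈ s, ∫ ω, (Real.exp ‖X i ω‖ - ‖X i ω‖) ∂P :=
        measureReal_le_norm_sum_le hindep hX hexp hmean s r
    _ ≤ 2 * Real.exp (-r) * ∏ i ∈ s, Real.exp ((∫ ω, ‖X i ω‖ ^ 2 ∂P) / (2 * (1 - b))) := by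
        gcongr with i
        · exact fun i _ ↦ integral_exp_norm_sub_norm_nonneg _
        · exact integral_exp_norm_sub_norm_le (hX i).aestronglyMeasurable (hXb i) hb
    _ = 2 * Real.exp ((∑ i ∈ s, ∫ ω, ‖X i ω‖ ^ 2 ∂P) / (2 * (1 - b)) - r) := by
        rw [← Real.exp_sum, ← Finset.sum_div, mul_assoc, ← Real.exp_add, neg_add_eq_sub]

theorem measureReal_add_sqrt_lt_norm_sum_le {b t : ℝ} (hindep : iIndepFun X P)
    (hX : ∀ i, AEMeasurable (X i) P) (hb : 0 ≤ b) (hXb : ∀ i, ∀ᵐ ω ∂P, ‖X i ω‖ ≤ b)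
    (hmean : ∀ i, ∫ ω, X i ω ∂P = 0) (s : Finset ι) (ht : 0 < t) :
    P.real {ω | b * t + √(2 * (∑ i ∈ s, ∫ ω, ‖X i ω‖ ^ 2 ∂P) * t) < ‖∑ i ∈ s, X i ω‖} ≤
      2 * Real.exp (-t) := by
  set v := ∑ i ∈ s, ∫ ω, ‖X i ω‖ ^ 2 ∂P with hv
  have hv0 : 0 ≤ v := Finset.sum_nonneg fun i _ ↦ integral_nonneg fun ω ↦ sq_nonneg ‖X i ω‖
  rcases hv0.eq_or_lt with hvzero | hvpos
  · have hsum := ae_sum_eq_zero_of_sum_integral_norm_sq_eq_zero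
      (fun i _ ↦ integrable_norm_sq_of_norm_le (hX i).aestronglyMeasurable (hXb i)) hvzero.symm
    have hnull : P {ω | b * t + √(2 * v * t) < ‖∑ i ∈ s, X i ω‖} = 0 := by
      refine measure_eq_zero_iff_ae_notMem.2 ?_
      filter_upwards [hsum] with ω hω
      rw [hω, norm_zero, not_lt]
      positivity
    rw [measureReal_def, hnull, ENNReal.toReal_zero]
    positivity
  · obtain ⟨l, hl, hlb, hexponent⟩ := exists_bernstein_exponent hb hvpos ht
    have hscaled := measureReal_le_norm_sum_le_of_norm_le (X := fun i ω ↦ l • X i ω)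
      (hindep.comp (fun _ x ↦ l • x) fun _ ↦ by fun_prop) (fun i ↦ (hX i).const_smul l)
      (fun i ↦ by
        filter_upwards [hXb i] with ω hω
        rw [norm_smul, Real.norm_of_nonneg hl.le]
        gcongr) hlb
      (fun i ↦ by rw [integral_smul, hmean i, smul_zero]) s (l * (b * t + √(2 * v * t)))
    simp only [← Finset.smul_sum, norm_smul, Real.norm_of_nonneg hl.le, mul_pow,
      integral_const_mul, ← Finset.mul_sum, mul_le_mul_iff_right₀ hl, ← hv, hexponent] at hscaled
    have hsubset : {ω | b * t + √(2 * v * t) < ‖∑ i ∈ s, X i ω‖} ⊆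
        {ω | b * t + √(2 * v * t) ≤ ‖∑ i ∈ s, X i ω‖} :=
      Set.ofPred_subset_ofPred.2 fun _ ↦ le_of_lt
    exact (measureReal_mono hsubset).trans hscaled

theorem measureReal_add_sqrt_lt_norm_sum_sub_integral_le {M t : ℝ} (hindep : iIndepFun X P)
    (hX : ∀ i, AEMeasurable (X i) P) (hM : 0 ≤ M) (hXM : ∀ i, ∀ᵐ ω ∂P, ‖X i ω‖ ≤ M)
    (s : Finset ι) (ht : 0 < t) :
    P.real {ω | 2 * M * t + √(2 * (∑ i ∈ s, ∫ ω, ‖X i ω‖ ^ 2 ∂P) * t) <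
      ‖∑ i ∈ s, (X i ω - ∫ ω', X i ω' ∂P)‖} ≤ 2 * Real.exp (-t) := by
  have hint (i : ι) : Integrable (X i) P :=
    Integrable.of_bound (hX i).aestronglyMeasurable M (hXM i)
  have hbound (i : ι) : ∀ᵐ ω ∂P, ‖X i ω - ∫ ω', X i ω' ∂P‖ ≤ 2 * M := by
    have hmean : ‖∫ ω, X i ω ∂P‖ ≤ M := by
      simpa using norm_integral_le_of_norm_le_const (hXM i)
    filter_upwards [hXM i] with ω hω
    linarith [norm_sub_le (X i ω) (∫ ω', X i ω' ∂P)]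
  have hcentered (i : ι) : ∫ ω, (X i ω - ∫ ω', X i ω' ∂P) ∂P = 0 := by
    rw [integral_sub (hint i) (integrable_const _)]
    simp
  have hvariance : ∑ i ∈ s, ∫ ω, ‖X i ω - ∫ ω', X i ω' ∂P‖ ^ 2 ∂P ≤
      ∑ i ∈ s, ∫ ω, ‖X i ω‖ ^ 2 ∂P :=
    Finset.sum_le_sum fun i _ ↦ integral_norm_sub_integral_sq_le (hint i)
      (integrable_norm_sq_of_norm_le (hX i).aestronglyMeasurable (hXM i))
  calc P.real {ω | 2 * M * t + √(2 * (∑ i ∈ s, ∫ ω, ‖X i ω‖ ^ 2 ∂P) * t) <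
        ‖∑ i ∈ s, (X i ω - ∫ ω', X i ω' ∂P)‖}
      ≤ P.real {ω | 2 * M * t +
          √(2 * (∑ i ∈ s, ∫ ω, ‖X i ω - ∫ ω', X i ω' ∂P‖ ^ 2 ∂P) * t) <
            ‖∑ i ∈ s, (X i ω - ∫ ω', X i ω' ∂P)‖} := by
        refine measureReal_mono (Set.ofPred_subset_ofPred.2 fun ω ↦ lt_of_le_of_lt ?_)
        gcongr
    _ ≤ 2 * Real.exp (-t) :=
        measureReal_add_sqrt_lt_norm_sum_le
          (hindep.comp (fun i x ↦ x - ∫ ω', X i ω' ∂P) fun _ ↦ by fun_prop)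
          (fun i ↦ (hX i).sub_const _) (by positivity) hbound hcentered s ht

end Probability

theorem hilbert_hoeffding_general
    {Ω : Type*} [MeasurableSpace Ω] (P : Measure Ω) [IsProbabilityMeasure P]
    {H : Type*} [NormedAddCommGroup H] [InnerProductSpace ℝ H] [CompleteSpace H]
    [SecondCountableTopology H] [MeasurableSpace H] [BorelSpace H]
    {ι : Type*} [Fintype ι] [Nonempty ι] (X : ι → Ω → H) (hX : ∀ i, AEMeasurable (X i) P)
    (hindep : iIndepFun X P) (M : ℝ) (hM : ∀ i, ∀ᵐ ω ∂P, ‖X i ω‖ ≤ M)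
    (δ : ℝ) (hδ0 : 0 < δ) (hδ1 : δ < 1) :
    1 - ENNReal.ofReal δ ≤
      P {ω | ‖(1 / (Fintype.card ι : ℝ)) • ∑ i, (X i ω - ∫ ω', X i ω' ∂P)‖ ≤
        2 * M * Real.log (2 / δ) / Fintype.card ι +
          √(2 * ((∑ i, ∫ ω, ‖X i ω‖ ^ 2 ∂P) / Fintype.card ι) * Real.log (2 / δ) /
            Fintype.card ι)} := by
  have hM0 : 0 ≤ M := by
    obtain ⟨ω, hω⟩ := (hM (Classical.arbitrary ι)).exists
    exact (norm_nonneg _).trans hω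
  have hn : (0 : ℝ) < Fintype.card ι := by exact_mod_cast Fintype.card_pos
  have htail := measureReal_add_sqrt_lt_norm_sum_sub_integral_le hindep hX hM0 hM Finset.univ
    (Real.log_pos ((one_lt_div hδ0).2 (by linarith)) : 0 < Real.log (2 / δ))
  rw [Real.exp_neg, Real.exp_log (by positivity), inv_div, mul_div_cancel₀ _ two_ne_zero]
    at htail
  set v := ∑ i, ∫ ω, ‖X i ω‖ ^ 2 ∂P
  set L := Real.log (2 / δ)
  set n : ℝ := (Fintype.card ι : ℝ)
  have hthreshold : 2 * M * L / n + √(2 * (v / n) * L / n) = (2 * M * L + √(2 * v * L)) / n := by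
    rw [show 2 * (v / n) * L / n = 2 * v * L / n ^ 2 by field_simp,
      Real.sqrt_div' _ (sq_nonneg n), Real.sqrt_sq hn.le, add_div]
  have hnorm (x : H) : ‖(1 / n) • x‖ = ‖x‖ / n := by
    rw [norm_smul, Real.norm_of_nonneg (by positivity), one_div_mul_eq_div]
  simp only [hthreshold, hnorm, div_le_div_iff_of_pos_right hn]
  rw [tsub_le_iff_right, ← measure_univ (μ := P)]
  refine (measure_univ_le_add_compl _).trans (add_le_add_right ?_ _)
  rw [← ofReal_measureReal, Set.compl_ofPred]
  simpa only [not_le] using ENNReal.ofReal_le_ofReal htail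

theorem hilbert_hoeffding_of_identDistrib
    {Ω : Type*} [MeasurableSpace Ω] (P : Measure Ω) [IsProbabilityMeasure P]
    {Y : Type*} [MeasurableSpace Y] (ρ : Measure Y)
    {H : Type*} [NormedAddCommGroup H] [InnerProductSpace ℝ H] [CompleteSpace H]
    [SecondCountableTopology H] [MeasurableSpace H] [BorelSpace H]
    {ι : Type*} [Fintype ι] [Nonempty ι] (X : ι → Ω → H) (ξ : Y → H)
    (hident : ∀ i, IdentDistrib (X i) ξ P ρ) (hindep : iIndepFun X P)
    (M : ℝ) (hM : ∀ᵐ y ∂ρ, ‖ξ y‖ ≤ M) (δ : ℝ) (hδ0 : 0 < δ) (hδ1 : δ < 1) :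
    1 - ENNReal.ofReal δ ≤
      P {ω | ‖(1 / (Fintype.card ι : ℝ)) • (∑ i, X i ω) - ∫ y, ξ y ∂ρ‖ ≤
        2 * M * Real.log (2 / δ) / Fintype.card ι +
          √(2 * (∫ y, ‖ξ y‖ ^ 2 ∂ρ) * Real.log (2 / δ) / Fintype.card ι)} := by
  have hmean (i : ι) : ∫ ω, X i ω ∂P = ∫ y, ξ y ∂ρ := (hident i).integral_eq
  have hsq (i : ι) : ∫ ω, ‖X i ω‖ ^ 2 ∂P = ∫ y, ‖ξ y‖ ^ 2 ∂ρ := (hident i).norm.sq.integral_eq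
  have hXM (i : ι) : ∀ᵐ ω ∂P, ‖X i ω‖ ≤ M :=
    (hident i).symm.ae_snd (measurableSet_le measurable_norm measurable_const) hM
  have h := hilbert_hoeffding_general P X (fun i ↦ (hident i).aemeasurable_fst) hindep M hXM
    δ hδ0 hδ1
  simpa [hmean, hsq, smul_sub, ← Nat.cast_smul_eq_nsmul ℝ, smul_smul] using h

/-- Probability inequality for Hilbert-space valued random variables
(Lemma from Smale–Zhou): with confidence `1 - δ`, the empirical mean of `m`
i.i.d. samples of a bounded `H`-valued random variable `ξ` deviates from its
expectation by at most `2M log(2/δ)/m + √(2σ²(ξ) log(2/δ)/m)`. -/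
theorem hilbert_hoeffding
    {Y : Type*} [MeasurableSpace Y] (ρ : Measure Y) [IsProbabilityMeasure ρ]
    {H : Type*} [NormedAddCommGroup H] [InnerProductSpace ℝ H] [CompleteSpace H]
    [SecondCountableTopology H] [MeasurableSpace H] [BorelSpace H]
    (ξ : Y → H) (hmeas : Measurable ξ)
    (M : ℝ) (hM : ∀ᵐ y ∂ρ, ‖ξ y‖ ≤ M)
    (m : ℕ) (hm : 1 ≤ m) (δ : ℝ) (hδ0 : 0 < δ) (hδ1 : δ < 1) :
    1 - ENNReal.ofReal δ ≤
      (Measure.pi fun _ : Fin m => ρ)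
        {y : Fin m → Y |
          ‖(1 / (m : ℝ)) • (∑ i : Fin m, ξ (y i)) - ∫ x, ξ x ∂ρ‖ ≤
            2 * M * Real.log (2 / δ) / m +
              Real.sqrt (2 * (∫ x, ‖ξ x‖ ^ 2 ∂ρ) * Real.log (2 / δ) / m)} := by
  have : Nonempty (Fin m) := ⟨⟨0, hm⟩⟩
  have hident (i : Fin m) : IdentDistrib (fun y ↦ ξ (y i)) ξ (Measure.pi fun _ ↦ ρ) ρ :=
    ((measurePreserving_eval (fun _ ↦ ρ) i).hasLaw.identDistrib .id).comp hmeas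
  have h := hilbert_hoeffding_of_identDistrib (Measure.pi fun _ ↦ ρ) ρ (fun i y ↦ ξ (y i)) ξ hident
    (iIndepFun_pi fun _ ↦ hmeas.aemeasurable) M hM δ hδ0 hδ1
  rwa [Fintype.card_fin] at h
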